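/- Given lenses (f, φ) : A ⇌ B and (g, γ) : C ⇌ B, let A ×_B C denote the strict pullback category whose objects are pairs (a, c) with f(a) = g(c) and whose morphisms (a, c) ⟶ (a', c') are pairs (u : a ⟶ a', v : c ⟶ c') with f(u) = g(v). Then the projection π₀ : A ×_B C ⥤ A admits the lens structure with lifting ((a, c), u : a ⟶ a') ↦ (u, γ(c, f(u))), the projection π₁ : A ×_B C ⥤ C admits the lens structure with lifting ((a, c), v : c ⟶ c') ↦ (φ(a, g(v)), v), and the composite of the π₀ lens with (f, φ) equals the composite of the π₁ lens with (g, γ) as lenses. -/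

import Mathlib

open CategoryTheory

universe u

/-- A functor `F` is a discrete opfibration if for every object `a` of its domain and
every morphism `u : F.obj a ⟶ b` of its codomain, there exists a unique morphism `w`
with domain `a` such that `F.map w = u` (up to the identification of codomains). -/
def IsDiscreteOpfibration {A B : Type u} [SmallCategory A] [SmallCategory B]
    (F : A ⥤ B) : Prop :=
  ∀ ⦃a : A⦄ ⦃b : B⦄ (u : F.obj a ⟶ b),
    ∃! w : Σ a' : A, a ⟶ a', ∃ h : F.obj w.1 = b, F.map w.2 = u ≫ eqToHom h.symm

/-- A (delta) lens between small categories: a functor together with a lifting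
operation satisfying the three lens axioms. `lift u` packages the codomain
`a'` of the chosen lift together with the lift `a ⟶ a'` itself. -/
structure Lens (A B : Type u) [SmallCategory A] [SmallCategory B] where
  /-- the underlying (Get) functor -/
  func : A ⥤ B
  /-- the lifting (Put) operation -/
  lift : ∀ ⦃a : A⦄ ⦃b : B⦄, (func.obj a ⟶ b) → Σ a' : A, a ⟶ a'
  /-- the codomain of the lift lies over the codomain of the lifted morphism -/
  lift_cod : ∀ ⦃a : A⦄ ⦃b : B⦄ (u : func.obj a ⟶ b), func.obj (lift u).1 = b
  /-- axiom (1): `f (φ (a, u)) = u` -/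
  lift_map : ∀ ⦃a : A⦄ ⦃b : B⦄ (u : func.obj a ⟶ b),
      func.map (lift u).2 = u ≫ eqToHom (lift_cod u).symm
  /-- axiom (2): `φ (a, 1) = 1` -/
  lift_id : ∀ a : A, lift (𝟙 (func.obj a)) = ⟨a, 𝟙 a⟩
  /-- axiom (3): `φ (a, v ∘ u) = φ (a', v) ∘ φ (a, u)` -/
  lift_comp : ∀ ⦃a : A⦄ ⦃b c : B⦄ (u : func.obj a ⟶ b) (v : b ⟶ c),
      lift (u ≫ v) = ⟨(lift (eqToHom (lift_cod u) ≫ v)).1,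
        (lift u).2 ≫ (lift (eqToHom (lift_cod u) ≫ v)).2⟩

namespace Lens

variable {A B C : Type u} [SmallCategory A] [SmallCategory B] [SmallCategory C]

theorem lift_eqToHom (L : Lens A B) {a a' : A} (h : a' = a) {b : B}
    (u : L.func.obj a ⟶ b) (h' : L.func.obj a' = L.func.obj a) :
    L.lift (eqToHom h' ≫ u) = ⟨(L.lift u).1, eqToHom h ≫ (L.lift u).2⟩ := by
  subst h; simp

/-- The identity lens on a small category. -/
def id (A : Type u) [SmallCategory A] : Lens A A where
  func := Functor.id A
  lift _ b u := ⟨b, u⟩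
  lift_cod _ _ _ := rfl
  lift_map := by intros; simp
  lift_id := by intros; rfl
  lift_comp := by intros; simp

/-- Composition of lenses: `(L.comp M).lift u = L.lift ((M.lift u).2)`. -/
def comp (L : Lens A B) (M : Lens B C) : Lens A C where
  func := L.func ⋙ M.func
  lift _ _ u := L.lift (M.lift u).2
  lift_cod a c u := by
    show M.func.obj (L.func.obj _) = c
    rw [L.lift_cod]
    exact M.lift_cod u
  lift_map a c u := by
    show M.func.map (L.func.map _) = _
    rw [L.lift_map, Functor.map_comp, M.lift_map, eqToHom_map]
    simp
  lift_id a := by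
    show L.lift (M.lift (𝟙 (M.func.obj (L.func.obj a)))).2 = _
    rw [M.lift_id]
    exact L.lift_id a
  lift_comp a c c' u v := by
    show L.lift (M.lift (u ≫ v)).2 = _
    rw [M.lift_comp u v]
    show L.lift ((M.lift u).2 ≫ (M.lift (eqToHom (M.lift_cod u) ≫ v)).2) = _
    rw [L.lift_comp]
    have key : M.lift (eqToHom (show (L.func ⋙ M.func).obj (L.lift (M.lift u).2).1 = c by
          show M.func.obj (L.func.obj _) = c; rw [L.lift_cod]; exact M.lift_cod u) ≫ v)
        = ⟨(M.lift (eqToHom (M.lift_cod u) ≫ v)).1,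
            eqToHom (L.lift_cod (M.lift u).2) ≫ (M.lift (eqToHom (M.lift_cod u) ≫ v)).2⟩ := by
      rw [show (eqToHom (show (L.func ⋙ M.func).obj (L.lift (M.lift u).2).1 = c by
          show M.func.obj (L.func.obj _) = c; rw [L.lift_cod]; exact M.lift_cod u) ≫ v)
        = eqToHom (congrArg M.func.obj (L.lift_cod (M.lift u).2)) ≫ (eqToHom (M.lift_cod u) ≫ v) by
          rw [← Category.assoc, eqToHom_trans]]
      exact M.lift_eqToHom (L.lift_cod (M.lift u).2) _ _
    beta_reduce
    rw [key]

/-- A lens is a monomorphism in the category of small categories and lenses if it is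
left-cancellable with respect to lens composition. -/
def IsMono (f : Lens A B) : Prop :=
  ∀ ⦃D : Type u⦄ [SmallCategory D], ∀ x y : Lens D A, x.comp f = y.comp f → x = y

/-- A lens is an epimorphism in the category of small categories and lenses if it is
right-cancellable with respect to lens composition. -/
def IsEpi (f : Lens A B) : Prop :=
  ∀ ⦃C : Type u⦄ [SmallCategory C], ∀ x y : Lens B C, f.comp x = f.comp y → x = y

end Lens
/-- The strict pullback category of two functors: objects are pairs `(a, c)` with
`f.obj a = g.obj c`, morphisms are pairs `(u, v)` with `f.map u = g.map v`
(modulo the identification of endpoints). -/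
def CatPullback {A B C : Type u} [SmallCategory A] [SmallCategory B] [SmallCategory C]
    (f : A ⥤ B) (g : C ⥤ B) : Type u :=
  { p : A × C // f.obj p.1 = g.obj p.2 }

namespace CatPullback

variable {A B C : Type u} [SmallCategory A] [SmallCategory B] [SmallCategory C]
  {f : A ⥤ B} {g : C ⥤ B}

instance : SmallCategory (CatPullback f g) where
  Hom x y := { m : (x.1.1 ⟶ y.1.1) × (x.1.2 ⟶ y.1.2) //
      f.map m.1 ≫ eqToHom y.2 = eqToHom x.2 ≫ g.map m.2 }
  id x := ⟨(𝟙 _, 𝟙 _), by simp⟩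
  comp m n := ⟨(m.1.1 ≫ n.1.1, m.1.2 ≫ n.1.2), by
    rw [Functor.map_comp, Functor.map_comp, Category.assoc, n.2, ← Category.assoc, m.2,
      Category.assoc]⟩
  id_comp m := by apply Subtype.ext; simp
  comp_id m := by apply Subtype.ext; simp
  assoc m n k := by apply Subtype.ext; simp

/-- The first projection functor of the strict pullback. -/
def proj₁ : CatPullback f g ⥤ A where
  obj x := x.1.1
  map m := m.1.1

/-- The second projection functor of the strict pullback. -/
def proj₂ : CatPullback f g ⥤ C where
  obj x := x.1.2
  map m := m.1.2

end CatPullback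

namespace Lens

variable {A B C : Type u} [SmallCategory A] [SmallCategory B] [SmallCategory C]

theorem ext_of_lift {L M : Lens A B} (h : L.func = M.func)
    (hlift : ∀ (a : A) (b : B) (u : M.func.obj a ⟶ b),
      L.lift (eqToHom (Functor.congr_obj h a) ≫ u) = M.lift u) : L = M := by
  obtain ⟨f, l, _, _, _, _⟩ := L
  obtain ⟨g, m, _, _, _, _⟩ := M
  obtain rfl : f = g := h
  obtain rfl : l = m := by
    funext a b u
    simpa using hlift a b u
  rfl

theorem lift_eqToHom_eq_id (L : Lens A B) {a : A} {b : B} (h : L.func.obj a = b) :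
    L.lift (eqToHom h) = ⟨a, 𝟙 a⟩ := by
  subst h
  exact L.lift_id a

theorem lift_comp_eqToHom (L : Lens A B) {a : A} {b b' : B} (u : L.func.obj a ⟶ b)
    (h : b = b') : L.lift (u ≫ eqToHom h) = L.lift u := by
  subst h
  simp

theorem lift_comp_map_lift (F : Lens A B) (G : Lens C B) {a : A} {c : C} {b : B}
    (p : F.func.obj a ⟶ G.func.obj c) (u : G.func.obj c ⟶ b) :
    F.lift (p ≫ G.func.map (G.lift u).2) = F.lift (p ≫ u) := by
  rw [G.lift_map, ← Category.assoc, F.lift_comp_eqToHom]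

end Lens

namespace CatPullback

variable {A B C : Type u} [SmallCategory A] [SmallCategory B] [SmallCategory C]

theorem sigma_hom_ext {f : A ⥤ B} {g : C ⥤ B} {x : CatPullback f g}
    {s t : Σ y : CatPullback f g, x ⟶ y}
    (h₁ : (⟨s.1.1.1, s.2.1.1⟩ : Σ a : A, x.1.1 ⟶ a) = ⟨t.1.1.1, t.2.1.1⟩)
    (h₂ : (⟨s.1.1.2, s.2.1.2⟩ : Σ c : C, x.1.2 ⟶ c) = ⟨t.1.1.2, t.2.1.2⟩) : s = t := by
  obtain ⟨⟨⟨a, c⟩, _⟩, ⟨⟨u, v⟩, _⟩⟩ := s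
  obtain ⟨⟨⟨a', c'⟩, _⟩, ⟨⟨u', v'⟩, _⟩⟩ := t
  cases h₁
  cases h₂
  rfl

theorem hom_comm {f : A ⥤ B} {g : C ⥤ B} {x y : CatPullback f g} (m : x ⟶ y) :
    f.map m.1.1 ≫ eqToHom y.2 = eqToHom x.2 ≫ g.map m.1.2 :=
  m.2

theorem proj₁_comp_eq_proj₂_comp (f : A ⥤ B) (g : C ⥤ B) :
    (proj₁ : CatPullback f g ⥤ A) ⋙ f = proj₂ ⋙ g :=
  CategoryTheory.Functor.ext (fun x : CatPullback f g => x.2) fun x y m => by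
    change f.map m.1.1 = eqToHom x.2 ≫ g.map m.1.2 ≫ eqToHom y.2.symm
    rw [← reassoc_of% hom_comm m, eqToHom_trans, eqToHom_refl, Category.comp_id]

section

variable (f : A ⥤ B) (G : Lens C B)

/-- The lift `(u, γ (c, f u))` of a morphism `u : a ⟶ a'` to the strict pullback of a functor `f`
and a lens `(g, γ)`, starting at the object `x = (a, c)`. -/
def proj₁Lift (x : CatPullback f G.func) {a' : A} (u : x.1.1 ⟶ a') :
    Σ y : CatPullback f G.func, x ⟶ y :=
  ⟨⟨(a', (G.lift (eqToHom x.2.symm ≫ f.map u)).1),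
      (G.lift_cod (eqToHom x.2.symm ≫ f.map u)).symm⟩,
    ⟨(u, (G.lift (eqToHom x.2.symm ≫ f.map u)).2), by rw [G.lift_map]; simp⟩⟩

theorem proj₁Lift_id (x : CatPullback f G.func) : proj₁Lift f G x (𝟙 x.1.1) = ⟨x, 𝟙 x⟩ := by
  refine sigma_hom_ext rfl ?_
  change G.lift (eqToHom x.2.symm ≫ f.map (𝟙 x.1.1)) = ⟨x.1.2, 𝟙 x.1.2⟩
  rw [f.map_id, Category.comp_id, G.lift_eqToHom_eq_id]

theorem proj₁Lift_comp (x : CatPullback f G.func) {a a' : A} (u : x.1.1 ⟶ a) (v : a ⟶ a') :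
    proj₁Lift f G x (u ≫ v) = ⟨(proj₁Lift f G (proj₁Lift f G x u).1 v).1,
      (proj₁Lift f G x u).2 ≫ (proj₁Lift f G (proj₁Lift f G x u).1 v).2⟩ := by
  refine sigma_hom_ext rfl ?_
  have h := G.lift_comp (eqToHom x.2.symm ≫ f.map u) (f.map v)
  rwa [Category.assoc, ← f.map_comp] at h

/-- The pullback of a lens along a functor, as a lens structure on the first projection. -/
def proj₁Lens : Lens (CatPullback f G.func) A where
  func := proj₁
  lift x _ u := proj₁Lift f G x u
  lift_cod _ _ _ := rfl
  lift_map _ _ u := (Category.comp_id (X := proj₁.obj _) u).symm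
  lift_id := proj₁Lift_id f G
  lift_comp x a _ u v :=
    (proj₁Lift_comp f G x u v).trans <|
      congrArg (fun w : a ⟶ _ =>
        (⟨_, (proj₁Lift f G x u).2 ≫ (proj₁Lift f G _ w).2⟩ : Σ y : CatPullback f G.func, x ⟶ y))
        (Category.id_comp v).symm

theorem proj₁Lens_lift_eqToHom_comp (x : CatPullback f G.func) {a' : A} (u : x.1.1 ⟶ a') :
    (proj₁Lens f G).lift (eqToHom (rfl : (proj₁Lens f G).func.obj x = x.1.1) ≫ u) =
      proj₁Lift f G x u :=
  congrArg (proj₁Lift f G x) (Category.id_comp u)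

end

/-- The functor exchanging the two components of the strict pullback. -/
def swap (f : A ⥤ B) (g : C ⥤ B) : CatPullback f g ⥤ CatPullback g f where
  obj x := ⟨x.1.swap, x.2.symm⟩
  map {x y} m := ⟨m.1.swap, by
    change g.map m.1.2 ≫ eqToHom y.2.symm = eqToHom x.2.symm ≫ f.map m.1.1
    rw [← cancel_mono (eqToHom y.2)]
    simp [hom_comm m]⟩

/-- The exchange of components as a lens. Exchanging twice is definitionally the identity, so a
morphism is lifted by exchanging its components. -/
def swapLens (f : A ⥤ B) (g : C ⥤ B) : Lens (CatPullback f g) (CatPullback g f) where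
  func := swap f g
  lift _ y m := ⟨(swap g f).obj y, (swap g f).map m⟩
  lift_cod _ _ _ := rfl
  lift_map _ _ m := (Category.comp_id m).symm
  lift_id _ := rfl
  lift_comp x y z m n :=
    congrArg (fun k : y ⟶ z =>
      (⟨_, (swap g f).map (m ≫ k)⟩ : Σ x' : CatPullback f g, x ⟶ x'))
      (Category.id_comp n).symm

/-- The pullback of a lens along a functor, as a lens structure on the second projection. It is
the first-projection lens of the exchanged pullback, so that its laws need no second proof. -/
def proj₂Lens (F : Lens A B) (g : C ⥤ B) : Lens (CatPullback F.func g) C :=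
  (swapLens F.func g).comp (proj₁Lens g F)

theorem proj₂Lens_lift_eqToHom_comp (F : Lens A B) (g : C ⥤ B) (x : CatPullback F.func g)
    {c' : C} (v : x.1.2 ⟶ c') :
    (proj₂Lens F g).lift (eqToHom (rfl : (proj₂Lens F g).func.obj x = x.1.2) ≫ v) =
      ⟨(swap g F.func).obj (proj₁Lift g F ((swap F.func g).obj x) v).1,
        (swap g F.func).map (proj₁Lift g F ((swap F.func g).obj x) v).2⟩ :=
  congrArg (fun w : x.1.2 ⟶ c' => (proj₂Lens F g).lift (a := x) w) (Category.id_comp v)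

theorem proj₁Lens_comp_eq_proj₂Lens_comp (F : Lens A B) (G : Lens C B) :
    (proj₁Lens F.func G).comp F = (proj₂Lens F G.func).comp G := by
  -- Both composites lift `u` to the pair of its lifts along `F` and along `G`.
  refine Lens.ext_of_lift (proj₁_comp_eq_proj₂_comp F.func G.func) fun x b u => ?_
  change G.func.obj x.1.2 ⟶ b at u
  refine sigma_hom_ext ?_ ?_
  · change F.lift (eqToHom x.2 ≫ u) = F.lift (eqToHom x.2 ≫ G.func.map (G.lift u).2)
    exact (F.lift_comp_map_lift G _ u).symm
  · change G.lift (eqToHom x.2.symm ≫ F.func.map (F.lift (eqToHom x.2 ≫ u)).2) = G.lift u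
    rw [G.lift_comp_map_lift, eqToHom_trans_assoc, eqToHom_refl, Category.id_comp]

end CatPullback

/-- The strict pullback of the underlying functors of two lenses `F : A ⇌ B` and
`G : C ⇌ B` carries projection lens structures (with the canonical liftings
`((a, c), u) ↦ (u, γ(c, f u))` and `((a, c), v) ↦ (φ(a, g v), v)`), and the two
composite lenses to `B` agree. -/
theorem imported_pullback_lens {A B C : Type u}
    [SmallCategory A] [SmallCategory B] [SmallCategory C]
    (F : Lens A B) (G : Lens C B) :
    ∃ (P₀ : Lens (CatPullback F.func G.func) A)
      (h₀ : P₀.func = CatPullback.proj₁)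
      (P₁ : Lens (CatPullback F.func G.func) C)
      (h₁ : P₁.func = CatPullback.proj₂),
      (∀ (x : CatPullback F.func G.func) (a' : A) (u : x.1.1 ⟶ a'),
        P₀.lift (eqToHom (Functor.congr_obj h₀ x) ≫ u) =
          ⟨⟨(a', (G.lift (eqToHom x.2.symm ≫ F.func.map u)).1),
              (G.lift_cod (eqToHom x.2.symm ≫ F.func.map u)).symm⟩,
            ⟨(u, (G.lift (eqToHom x.2.symm ≫ F.func.map u)).2),
              by rw [G.lift_map]; simp⟩⟩) ∧
      (∀ (x : CatPullback F.func G.func) (c' : C) (v : x.1.2 ⟶ c'),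
        P₁.lift (eqToHom (Functor.congr_obj h₁ x) ≫ v) =
          ⟨⟨((F.lift (eqToHom x.2 ≫ G.func.map v)).1, c'),
              F.lift_cod (eqToHom x.2 ≫ G.func.map v)⟩,
            ⟨((F.lift (eqToHom x.2 ≫ G.func.map v)).2, v),
              by rw [F.lift_map]; simp⟩⟩) ∧
      P₀.comp F = P₁.comp G := by
  exact ⟨CatPullback.proj₁Lens F.func G, rfl, CatPullback.proj₂Lens F G.func, rfl,
    fun x _ u => CatPullback.proj₁Lens_lift_eqToHom_comp F.func G x u,
    fun x _ v => CatPullback.proj₂Lens_lift_eqToHom_comp F G.func x v,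
    CatPullback.proj₁Lens_comp_eq_proj₂Lens_comp F G⟩
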